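/- Let (a_α)_{α ∈ 𝔽ₙ⁺} be complex numbers with a_{g₀} real such that for every r ∈ [0,1) the series ∑_{k=1}^∞ r^k (∑_{|α|=k} |a_α|²)^{1/2} converges, and such that for every r ∈ [0,1) the selfadjoint operator H(r) := ∑_{k=1}^∞ ∑_{|α|=k} r^k conj(a_α) S_α* + a_{g₀} I + ∑_{k=1}^∞ ∑_{|α|=k} r^k a_α S_α (which converges in operator norm) satisfies ‖H(r)‖ ≤ 1. Then: (i) (∑_{|α|=k} |a_α|²)^{1/2} ≤ 1 − |a_{g₀}| for every k ≥ 1; (ii) for every complex Hilbert space 𝒦 and every (T₁,…,Tₙ) ∈ [B(𝒦)ⁿ]_{1/2}, ∑_{k=0}^∞ ‖∑_{|α|=k} |a_α| T_α‖ ≤ 1; (iii) for every (T₁,…,Tₙ) ∈ [B(𝒦)ⁿ]_{1/3}, ∑_{k=1}^∞ ‖∑_{|α|=k} |a_α| T_α*‖ + |a_{g₀}| + ∑_{k=1}^∞ ‖∑_{|α|=k} |a_α| T_α‖ ≤ 1. In particular, for nonnegative tuples r: ∑_{α ∈ 𝔽ₙ⁺} |a_α| r_α ≤ 1 if ‖r‖₂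 ≤ 1/2, and |a_{g₀}| + 2 ∑_{|α| ≥ 1} |a_α| r_α ≤ 1 if ‖r‖₂ ≤ 1/3. -/

import Mathlib

open scoped BigOperators

/-- The full Fock space, identified with `ℓ²(𝔽ₙ⁺)` where the free monoid `𝔽ₙ⁺` on `n`
generators is identified with `List (Fin n)`. -/
noncomputable abbrev Fock (n : ℕ) : Type := lp (fun _ : List (Fin n) => ℂ) 2

/-- The orthonormal basis vector `e_α` of the Fock space. -/
noncomputable def fockBasis (n : ℕ) (α : List (Fin n)) : Fock n := lp.single 2 α 1

/-- For a word `α = g_{i₁} ⋯ g_{i_k}`, the product `T_α = T_{i₁} ⋯ T_{i_k}` (and `T_{g₀} = 1`). -/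
noncomputable def wordProd {n : ℕ} {M : Type*} [Monoid M] (T : Fin n → M)
    (α : List (Fin n)) : M :=
  (α.map T).prod

/-!
Fix `k ≥ 1` and let `y = ∑_{|α|=k} a_α e_α`. With `A = ∑_{k ≥ 1} ∑_{|α|=k} r^k a_α S_α`, the
compression of `H(r) = A* + a_{g₀} + A` to the span of the orthonormal vectors `e_{g₀}` and `y/‖y‖`
is a real symmetric `2 × 2` matrix with diagonal entries `a_{g₀}` and off-diagonal entries
`r^k ‖y‖`, because `A` raises the degree of the Fock space grading. As it is a contraction,
`|a_{g₀}| + r^k ‖y‖ ≤ 1`, and `r → 1` gives (i).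

For a row operator of norm `ρ`, the Cauchy–Schwarz inequality bounds the degree `k` part of the
series by `ρ^k (∑_{|α|=k} |a_α|²)^{1/2} ≤ ρ^k (1 - |a_{g₀}|)`. Summing the geometric series leaves
Bohr's inequalities `x + (1 - x) ρ/(1 - ρ) ≤ 1` for `ρ = 1/2` and
`x + 2 (1 - x) ρ/(1 - ρ) ≤ 1` for `ρ = 1/3`.
-/

open scoped InnerProductSpace

section HomogeneousPart

variable {n : ℕ}

/-- The homogeneous part of degree `k` of the formal power series `∑ c_α Z_α`, evaluated at the
tuple `T`. Words of length `k` are enumerated as `List.ofFn w` with `w : Fin k → Fin n`. -/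
noncomputable def homogeneousPart {R A : Type*} [CommSemiring R] [Semiring A] [Algebra R A]
    (c : List (Fin n) → R) (T : Fin n → A) (k : ℕ) : A :=
  ∑ w : Fin k → Fin n, c (List.ofFn w) • wordProd T (List.ofFn w)

/-- The `ℓ²` norm of the coefficients of degree `k`, which controls `homogeneousPart`. -/
noncomputable def coeffNorm {E : Type*} [Norm E] (c : List (Fin n) → E) (k : ℕ) : ℝ :=
  √(∑ w : Fin k → Fin n, ‖c (List.ofFn w)‖ ^ 2)

lemma wordProd_cons {M : Type*} [Monoid M] (T : Fin n → M) (i : Fin n) (α : List (Fin n)) :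
    wordProd T (i :: α) = T i * wordProd T α := by
  simp only [wordProd, List.map_cons, List.prod_cons]

lemma sum_mul_smul_wordProd {R A : Type*} [CommSemiring R] [Semiring A] [Algebra R A]
    (z : R) (c : List (Fin n) → R) (T : Fin n → A) (k : ℕ) :
    ∑ w : Fin k → Fin n, (z * c (List.ofFn w)) • wordProd T (List.ofFn w) =
      z • homogeneousPart c T k := by
  simp only [homogeneousPart, Finset.smul_sum, mul_smul]

lemma coeffNorm_nonneg {E : Type*} [Norm E] (c : List (Fin n) → E) (k : ℕ) : 0 ≤ coeffNorm c k :=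
  Real.sqrt_nonneg _

lemma coeffNorm_zero {E : Type*} [SeminormedAddGroup E] (c : List (Fin n) → E) :
    coeffNorm c 0 = ‖c []‖ := by
  simp [coeffNorm]

lemma coeffNorm_norm {E : Type*} [SeminormedAddCommGroup E] (c : List (Fin n) → E) (k : ℕ) :
    coeffNorm (fun α => ‖c α‖) k = coeffNorm c k := by
  simp only [coeffNorm, norm_norm]

lemma coeffNorm_ofReal {𝕜 : Type*} [RCLike 𝕜] (c : List (Fin n) → ℝ) (k : ℕ) :
    coeffNorm (fun α => (c α : 𝕜)) k = coeffNorm c k := by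
  simp only [coeffNorm, RCLike.norm_ofReal, Real.norm_eq_abs]

end HomogeneousPart

section Compression

variable {E : Type*} [NormedAddCommGroup E] [InnerProductSpace ℂ E] [CompleteSpace E]
  {A : E →L[ℂ] E} {x : ℝ}

lemma abs_mul_sq_add_two_mul_re_inner_le (hA : ‖A.adjoint + (x : ℂ) • 1 + A‖ ≤ 1) (v : E) :
    |x * ‖v‖ ^ 2 + 2 * (⟪v, A v⟫_ℂ).re| ≤ ‖v‖ ^ 2 := by
  have hquad : (⟪v, (A.adjoint + (x : ℂ) • 1 + A) v⟫_ℂ).re =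
      x * ‖v‖ ^ 2 + 2 * (⟪v, A v⟫_ℂ).re := by
    have hadj : (⟪A v, v⟫_ℂ).re = (⟪v, A v⟫_ℂ).re := inner_re_symm (𝕜 := ℂ) _ _
    have hself : (⟪v, v⟫_ℂ).re = ‖v‖ ^ 2 := inner_self_eq_norm_sq (𝕜 := ℂ) v
    simp only [add_apply, smul_apply, one_apply_eq_self, inner_add_right, inner_smul_right,
      ContinuousLinearMap.adjoint_inner_right, Complex.add_re, Complex.re_ofReal_mul, hadj, hself]
    ring
  calc |x * ‖v‖ ^ 2 + 2 * (⟪v, A v⟫_ℂ).re|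
      ≤ ‖⟪v, (A.adjoint + (x : ℂ) • 1 + A) v⟫_ℂ‖ := hquad ▸ Complex.abs_re_le_norm _
    _ ≤ ‖v‖ * ‖(A.adjoint + (x : ℂ) • 1 + A) v‖ := norm_inner_le_norm _ _
    _ ≤ ‖v‖ * (1 * ‖v‖) := by gcongr; exact ContinuousLinearMap.le_of_opNorm_le _ hA v
    _ = ‖v‖ ^ 2 := by ring

/- The compression of `A* + x + A` to the span of `e` and `u` is `!![x, conj c; c, x]` with
`c = ⟪u, A e⟫`; the vectors `e ± u` detect `x ± Re c`. -/
lemma abs_add_abs_re_inner_le_one (hA : ‖A.adjoint + (x : ℂ) • 1 + A‖ ≤ 1) {e u : E}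
    (he : ‖e‖ = 1) (hu : ‖u‖ = 1) (heu : ⟪e, u⟫_ℂ = 0)
    (hee : ⟪e, A e⟫_ℂ = 0) (heAu : ⟪e, A u⟫_ℂ = 0) (huu : ⟪u, A u⟫_ℂ = 0) :
    |x| + |(⟪u, A e⟫_ℂ).re| ≤ 1 := by
  have hplus := abs_mul_sq_add_two_mul_re_inner_le hA (e + u)
  have hminus := abs_mul_sq_add_two_mul_re_inner_le hA (e - u)
  have hnorm_plus : ‖e + u‖ ^ 2 = 2 := by
    rw [@norm_add_sq ℂ, heu, he, hu]; norm_num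
  have hnorm_minus : ‖e - u‖ ^ 2 = 2 := by
    rw [@norm_sub_sq ℂ, heu, he, hu]; norm_num
  simp only [hnorm_plus, map_add, inner_add_left, inner_add_right, hee, heAu, huu,
    zero_add, add_zero] at hplus
  simp only [hnorm_minus, map_sub, inner_sub_left, inner_sub_right, hee, heAu, huu,
    sub_zero, zero_sub, Complex.neg_re] at hminus
  rw [abs_le] at hplus hminus
  rcases abs_cases x with hx | hx <;> rcases abs_cases (⟪u, A e⟫_ℂ).re with hc | hc <;> linarith

lemma mul_norm_le_one_sub_abs (hA : ‖A.adjoint + (x : ℂ) • 1 + A‖ ≤ 1) {e y : E} {q : ℝ}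
    (he : ‖e‖ = 1) (hey : ⟪e, y⟫_ℂ = 0) (hee : ⟪e, A e⟫_ℂ = 0) (heAy : ⟪e, A y⟫_ℂ = 0)
    (hyy : ⟪y, A y⟫_ℂ = 0) (hyAe : ⟪y, A e⟫_ℂ = q * ‖y‖ ^ 2) :
    q * ‖y‖ ≤ 1 - |x| := by
  rcases eq_or_ne y 0 with rfl | hy
  · have := abs_mul_sq_add_two_mul_re_inner_le hA e
    simp only [he, hee, one_pow, mul_one, Complex.zero_re, mul_zero, add_zero] at this
    simpa using this
  · have hy' : ‖y‖ ≠ 0 := norm_ne_zero_iff.mpr hy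
    set u : E := ((‖y‖⁻¹ : ℝ) : ℂ) • y with hu
    have hu_norm : ‖u‖ = 1 := by
      rw [hu, norm_smul, Complex.norm_real, norm_inv, norm_norm, inv_mul_cancel₀ hy']
    have huAe : ⟪u, A e⟫_ℂ = ((q * ‖y‖ : ℝ) : ℂ) := by
      rw [hu, inner_smul_left, hyAe, Complex.conj_ofReal]
      norm_cast
      field_simp
    have key := abs_add_abs_re_inner_le_one hA he hu_norm (by simp [hu, hey]) hee
      (by simp [hu, heAy]) (by simp [hu, hyy])
    rw [huAe, Complex.ofReal_re] at key
    linarith [le_abs_self (q * ‖y‖)]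

lemma hasSum_inner_apply {ι 𝕜 F : Type*} [RCLike 𝕜] [NormedAddCommGroup F]
    [InnerProductSpace 𝕜 F] {f : ι → F →L[𝕜] F} {B : F →L[𝕜] F} (hB : HasSum f B) (u v : F) :
    HasSum (fun i => ⟪u, f i v⟫_𝕜) ⟪u, B v⟫_𝕜 :=
  hB.mapL ((innerSL 𝕜 u).comp (ContinuousLinearMap.apply 𝕜 F v))

end Compression

section Fock

variable {n : ℕ} {S : Fin n → Fock n →L[ℂ] Fock n}

/-- The tuple of left creation operators on the full Fock space, characterized by its action on
the standard basis. -/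
def IsLeftCreation (S : Fin n → Fock n →L[ℂ] Fock n) : Prop :=
  ∀ (i : Fin n) (α : List (Fin n)), S i (fockBasis n α) = fockBasis n (i :: α)

/-- The degree `k` component of the full Fock space, for the grading by word length. -/
noncomputable def fockDegree (n k : ℕ) : Submodule ℂ (Fock n) :=
  Submodule.span ℂ (fockBasis n '' {α | α.length = k})

lemma orthonormal_fockBasis (n : ℕ) : Orthonormal ℂ (fockBasis n) := by
  rw [orthonormal_iff_ite]
  intro α β
  rw [fockBasis, fockBasis, lp.inner_single_left]
  simp [lp.single_apply, Pi.single_apply]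

lemma fockBasis_mem_fockDegree (α : List (Fin n)) : fockBasis n α ∈ fockDegree n α.length :=
  Submodule.subset_span ⟨α, rfl, rfl⟩

lemma inner_eq_zero_of_mem_fockDegree {j k : ℕ} (hjk : j ≠ k) {x y : Fock n}
    (hx : x ∈ fockDegree n j) (hy : y ∈ fockDegree n k) : ⟪x, y⟫_ℂ = 0 := by
  have hortho : fockDegree n j ⟂ fockDegree n k := by
    rw [fockDegree, fockDegree, Submodule.isOrtho_span]
    rintro _ ⟨α, rfl, rfl⟩ _ ⟨β, rfl, rfl⟩
    exact (orthonormal_fockBasis n).inner_eq_zero (ne_of_apply_ne List.length hjk)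
  exact hortho.inner_eq hx hy

namespace IsLeftCreation

lemma wordProd_apply_fockBasis (hS : IsLeftCreation S) (α β : List (Fin n)) :
    wordProd S α (fockBasis n β) = fockBasis n (α ++ β) := by
  induction α with
  | nil => simp [wordProd]
  | cons i α ih => rw [wordProd_cons, mul_apply_eq_comp, ih, hS, List.cons_append]

lemma homogeneousPart_apply_mem_fockDegree (hS : IsLeftCreation S) (c : List (Fin n) → ℂ)
    (j : ℕ) {k : ℕ} {x : Fock n} (hx : x ∈ fockDegree n k) :
    homogeneousPart c S j x ∈ fockDegree n (j + k) := by
  have hword (w : Fin j → Fin n) : wordProd S (List.ofFn w) x ∈ fockDegree n (j + k) := by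
    induction hx using Submodule.span_induction with
    | mem x hx =>
      obtain ⟨β, rfl, rfl⟩ := hx
      rw [hS.wordProd_apply_fockBasis]
      simpa using fockBasis_mem_fockDegree (List.ofFn w ++ β)
    | zero => simp
    | add x y _ _ hx hy => simpa using add_mem hx hy
    | smul z x _ hx => simpa using Submodule.smul_mem _ z hx
  rw [homogeneousPart, sum_apply]
  exact Submodule.sum_mem _ fun w _ => Submodule.smul_mem _ _ (hword w)

lemma norm_homogeneousPart_apply_vacuum (hS : IsLeftCreation S) (c : List (Fin n) → ℂ) (k : ℕ) :
    ‖homogeneousPart c S k (fockBasis n [])‖ = coeffNorm c k := by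
  have hexpand : homogeneousPart c S k (fockBasis n []) =
      ∑ w : Fin k → Fin n, c (List.ofFn w) • fockBasis n (List.ofFn w) := by
    simp [homogeneousPart, hS.wordProd_apply_fockBasis]
  have horth : Orthonormal ℂ fun w : Fin k → Fin n => fockBasis n (List.ofFn w) :=
    (orthonormal_fockBasis n).comp _ List.ofFn_injective
  have hinner := horth.inner_sum (fun w => c (List.ofFn w)) (fun w => c (List.ofFn w)) Finset.univ
  simp only [RCLike.conj_mul] at hinner
  rw [hexpand, coeffNorm, @norm_eq_sqrt_re_inner ℂ, hinner]
  norm_cast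

lemma inner_apply_eq_zero_of_hasSum (hS : IsLeftCreation S) {a : List (Fin n) → ℂ}
    {A : Fock n →L[ℂ] Fock n} {r : ℂ}
    (hA : HasSum (fun k : ℕ => r ^ (k + 1) • homogeneousPart a S (k + 1)) A)
    {i j : ℕ} (hij : i ≤ j) {u v : Fock n} (hu : u ∈ fockDegree n i) (hv : v ∈ fockDegree n j) :
    ⟪u, A v⟫_ℂ = 0 := by
  have hterm (k : ℕ) : ⟪u, (r ^ (k + 1) • homogeneousPart a S (k + 1)) v⟫_ℂ = 0 := by
    rw [smul_apply, inner_smul_right, inner_eq_zero_of_mem_fockDegree (by lia)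
      hu (hS.homogeneousPart_apply_mem_fockDegree a (k + 1) hv), mul_zero]
  exact (hasSum_inner_apply hA u v).unique (hasSum_zero.congr_fun hterm)

lemma inner_apply_of_mem_fockDegree_zero (hS : IsLeftCreation S) {a : List (Fin n) → ℂ}
    {A : Fock n →L[ℂ] Fock n} {r : ℂ}
    (hA : HasSum (fun k : ℕ => r ^ (k + 1) • homogeneousPart a S (k + 1)) A)
    {m : ℕ} {u v : Fock n} (hu : u ∈ fockDegree n (m + 1)) (hv : v ∈ fockDegree n 0) :
    ⟪u, A v⟫_ℂ = r ^ (m + 1) * ⟪u, homogeneousPart a S (m + 1) v⟫_ℂ := by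
  have hterm (k : ℕ) (hk : k ≠ m) : r ^ (k + 1) * ⟪u, homogeneousPart a S (k + 1) v⟫_ℂ = 0 := by
    rw [inner_eq_zero_of_mem_fockDegree (by lia) hu
      (hS.homogeneousPart_apply_mem_fockDegree a (k + 1) hv), mul_zero]
  have hsum : HasSum (fun k : ℕ => r ^ (k + 1) * ⟪u, homogeneousPart a S (k + 1) v⟫_ℂ)
      ⟪u, A v⟫_ℂ := by
    simpa only [smul_apply, inner_smul_right] using hasSum_inner_apply hA u v
  exact hsum.unique (hasSum_single m hterm)

lemma pow_mul_coeffNorm_le_one_sub_abs (hS : IsLeftCreation S) {a : List (Fin n) → ℂ}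
    {A : Fock n →L[ℂ] Fock n} {r x : ℝ}
    (hA : HasSum (fun k : ℕ => (r : ℂ) ^ (k + 1) • homogeneousPart a S (k + 1)) A)
    (hH : ‖A.adjoint + (x : ℂ) • 1 + A‖ ≤ 1) (m : ℕ) :
    r ^ (m + 1) * coeffNorm a (m + 1) ≤ 1 - |x| := by
  set e := fockBasis n []
  set y := homogeneousPart a S (m + 1) e
  have he : e ∈ fockDegree n 0 := fockBasis_mem_fockDegree []
  have hy : y ∈ fockDegree n (m + 1) := hS.homogeneousPart_apply_mem_fockDegree a _ he
  have hyAe : ⟪y, A e⟫_ℂ = ((r ^ (m + 1) : ℝ) : ℂ) * ‖y‖ ^ 2 := by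
    rw [hS.inner_apply_of_mem_fockDegree_zero hA hy he, Complex.ofReal_pow]
    exact congrArg _ (inner_self_eq_norm_sq_to_K y)
  rw [← hS.norm_homogeneousPart_apply_vacuum]
  exact mul_norm_le_one_sub_abs hH ((orthonormal_fockBasis n).1 [])
    (inner_eq_zero_of_mem_fockDegree (by lia) he hy)
    (hS.inner_apply_eq_zero_of_hasSum hA le_rfl he he)
    (hS.inner_apply_eq_zero_of_hasSum hA (Nat.zero_le _) he hy)
    (hS.inner_apply_eq_zero_of_hasSum hA le_rfl hy hy) hyAe

theorem coeffNorm_succ_le_one_sub_abs (hS : IsLeftCreation S) {a : List (Fin n) → ℂ}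
    {A : ℝ → Fock n →L[ℂ] Fock n} {x : ℝ}
    (hA : ∀ r ∈ Set.Ioo (0 : ℝ) 1,
      HasSum (fun k : ℕ => (r : ℂ) ^ (k + 1) • homogeneousPart a S (k + 1)) (A r))
    (hH : ∀ r ∈ Set.Ioo (0 : ℝ) 1, ‖(A r).adjoint + (x : ℂ) • 1 + A r‖ ≤ 1) (k : ℕ) :
    coeffNorm a (k + 1) ≤ 1 - |x| := by
  have hlim : Filter.Tendsto (fun r : ℝ => r ^ (k + 1) * coeffNorm a (k + 1))
      (nhdsWithin 1 (Set.Iio 1)) (nhds (coeffNorm a (k + 1))) := by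
    have hcont : Continuous fun r : ℝ => r ^ (k + 1) * coeffNorm a (k + 1) := by fun_prop
    simpa using (hcont.tendsto 1).mono_left nhdsWithin_le_nhds
  refine le_of_tendsto hlim ?_
  filter_upwards [Ioo_mem_nhdsLT (zero_lt_one' ℝ)] with r hr
  exact hS.pow_mul_coeffNorm_le_one_sub_abs (hA r hr) (hH r hr) k

end IsLeftCreation

end Fock

section Bohr

variable {b f : ℕ → ℝ}

lemma hasSum_pow_succ {ρ : ℝ} (h₀ : 0 ≤ ρ) (h₁ : ρ < 1) :
    HasSum (fun k : ℕ => ρ ^ (k + 1)) (ρ / (1 - ρ)) := by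
  simpa only [pow_succ', div_eq_mul_inv] using (hasSum_geometric_of_lt_one h₀ h₁).mul_left ρ

lemma summable_succ_and_tsum_succ_le {ρ : ℝ} (h₀ : 0 ≤ ρ) (h₁ : ρ < 1)
    (hb : ∀ k, b (k + 1) ≤ 1 - b 0) (hf : ∀ k, 0 ≤ f k) (hfb : ∀ k, f k ≤ b k * ρ ^ k) :
    Summable (fun k => f (k + 1)) ∧ ∑' k, f (k + 1) ≤ (1 - b 0) * (ρ / (1 - ρ)) := by
  have hgeom := (hasSum_pow_succ h₀ h₁).mul_left (1 - b 0)
  have hle (k : ℕ) : f (k + 1) ≤ (1 - b 0) * ρ ^ (k + 1) :=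
    (hfb (k + 1)).trans (mul_le_mul_of_nonneg_right (hb k) (pow_nonneg h₀ _))
  have hsummable := Summable.of_nonneg_of_le (fun k => hf (k + 1)) hle hgeom.summable
  exact ⟨hsummable, hasSum_le hle hsummable.hasSum hgeom⟩

lemma bohr_half (hb : ∀ k, b (k + 1) ≤ 1 - b 0) (hf : ∀ k, 0 ≤ f k)
    (hfb : ∀ k, f k ≤ b k * (1 / 2) ^ k) : Summable f ∧ ∑' k, f k ≤ 1 := by
  obtain ⟨htail, htail_le⟩ :=
    summable_succ_and_tsum_succ_le (by norm_num) (by norm_num) hb hf hfb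
  have hsummable : Summable f := (summable_nat_add_iff 1).mp htail
  have hzero : f 0 ≤ b 0 := by simpa using hfb 0
  refine ⟨hsummable, ?_⟩
  rw [hsummable.tsum_eq_zero_add]
  linarith

lemma bohr_third (hb : ∀ k, b (k + 1) ≤ 1 - b 0) (hf : ∀ k, 0 ≤ f k)
    (hfb : ∀ k, f k ≤ b k * (1 / 3) ^ k) :
    Summable (fun k => f (k + 1)) ∧ b 0 + 2 * ∑' k, f (k + 1) ≤ 1 := by
  obtain ⟨htail, htail_le⟩ :=
    summable_succ_and_tsum_succ_le (by norm_num) (by norm_num) hb hf hfb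
  exact ⟨htail, by linarith⟩

end Bohr

section RowOperator

variable {n : ℕ} {𝕜 K : Type*} [RCLike 𝕜] [NormedAddCommGroup K] [InnerProductSpace 𝕜 K]
  [CompleteSpace K]

/-- The norm of the row operator `[T₁, …, Tₙ]` from the direct sum of `n` copies of `K` to `K`. -/
noncomputable def rowNorm (T : Fin n → K →L[𝕜] K) : ℝ :=
  √‖∑ i, T i * (T i).adjoint‖

lemma rowNorm_nonneg (T : Fin n → K →L[𝕜] K) : 0 ≤ rowNorm T :=
  Real.sqrt_nonneg _

lemma sum_norm_adjoint_apply_sq_le (T : Fin n → K →L[𝕜] K) (x : K) :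
    ∑ i, ‖(T i).adjoint x‖ ^ 2 ≤ (rowNorm T * ‖x‖) ^ 2 := by
  have hinner : ∑ i, ‖(T i).adjoint x‖ ^ 2 =
      RCLike.re ⟪x, (∑ i, T i * (T i).adjoint) x⟫_𝕜 := by
    rw [sum_apply, inner_sum, map_sum]
    refine Finset.sum_congr rfl fun i _ => ?_
    rw [mul_apply_eq_comp, ← ContinuousLinearMap.adjoint_inner_left,
      inner_self_eq_norm_sq]
  calc ∑ i, ‖(T i).adjoint x‖ ^ 2
      ≤ ‖x‖ * ‖(∑ i, T i * (T i).adjoint) x‖ := hinner ▸ re_inner_le_norm _ _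
    _ ≤ ‖x‖ * (‖∑ i, T i * (T i).adjoint‖ * ‖x‖) := by
        gcongr; exact ContinuousLinearMap.le_opNorm _ _
    _ = (rowNorm T * ‖x‖) ^ 2 := by
        rw [mul_pow, rowNorm, Real.sq_sqrt (norm_nonneg _)]; ring

lemma sum_norm_adjoint_wordProd_apply_sq_le (T : Fin n → K →L[𝕜] K) (k : ℕ) (x : K) :
    ∑ w : Fin k → Fin n, ‖(wordProd T (List.ofFn w)).adjoint x‖ ^ 2 ≤
      (rowNorm T ^ k * ‖x‖) ^ 2 := by
  induction k generalizing x with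
  | zero => simp [wordProd, ← ContinuousLinearMap.star_eq_adjoint]
  | succ k ih =>
    calc ∑ w : Fin (k + 1) → Fin n, ‖(wordProd T (List.ofFn w)).adjoint x‖ ^ 2
        = ∑ i, ∑ w : Fin k → Fin n,
            ‖(wordProd T (List.ofFn w)).adjoint ((T i).adjoint x)‖ ^ 2 := by
          rw [← (Fin.consEquiv fun _ => Fin n).sum_comp, Fintype.sum_prod_type]
          simp [Fin.consEquiv, List.ofFn_succ, wordProd_cons, ContinuousLinearMap.mul_def,
            ContinuousLinearMap.adjoint_comp]
      _ ≤ ∑ i, (rowNorm T ^ k * ‖(T i).adjoint x‖) ^ 2 := Finset.sum_le_sum fun i _ => ih _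
      _ = (rowNorm T ^ k) ^ 2 * ∑ i, ‖(T i).adjoint x‖ ^ 2 := by
          simp only [mul_pow, Finset.mul_sum]
      _ ≤ (rowNorm T ^ k) ^ 2 * (rowNorm T * ‖x‖) ^ 2 := by
          gcongr; exact sum_norm_adjoint_apply_sq_le T x
      _ = (rowNorm T ^ (k + 1) * ‖x‖) ^ 2 := by ring

lemma adjoint_homogeneousPart (c : List (Fin n) → 𝕜) (T : Fin n → K →L[𝕜] K) (k : ℕ) :
    (homogeneousPart c T k).adjoint =
      ∑ w : Fin k → Fin n,
        starRingEnd 𝕜 (c (List.ofFn w)) • (wordProd T (List.ofFn w)).adjoint := by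
  simp only [homogeneousPart, map_sum, map_smulₛₗ]

lemma adjoint_tsum_pow_smul_homogeneousPart (c : List (Fin n) → 𝕜) (T : Fin n → K →L[𝕜] K)
    (z : 𝕜) :
    (∑' k : ℕ, z ^ (k + 1) • homogeneousPart c T (k + 1)).adjoint =
      ∑' k : ℕ, ∑ w : Fin (k + 1) → Fin n,
        (starRingEnd 𝕜 z ^ (k + 1) * starRingEnd 𝕜 (c (List.ofFn w))) •
          (wordProd T (List.ofFn w)).adjoint := by
  refine (ContinuousLinearMap.adjoint (𝕜 := 𝕜) (E := K)
    (F := K)).toContinuousLinearEquiv.map_tsum.trans (tsum_congr fun k => ?_)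
  rw [LinearIsometryEquiv.coe_toContinuousLinearEquiv, map_smulₛₗ, adjoint_homogeneousPart,
    Finset.smul_sum]
  simp only [map_pow, mul_smul]

lemma norm_homogeneousPart_le (c : List (Fin n) → 𝕜) (T : Fin n → K →L[𝕜] K) (k : ℕ) :
    ‖homogeneousPart c T k‖ ≤ coeffNorm c k * rowNorm T ^ k := by
  rw [← LinearIsometryEquiv.norm_map ContinuousLinearMap.adjoint, adjoint_homogeneousPart]
  have hbound : 0 ≤ coeffNorm c k * rowNorm T ^ k :=
    mul_nonneg (coeffNorm_nonneg c k) (pow_nonneg (rowNorm_nonneg T) k)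
  refine ContinuousLinearMap.opNorm_le_bound _ hbound fun x => ?_
  calc ‖(∑ w : Fin k → Fin n,
        starRingEnd 𝕜 (c (List.ofFn w)) • (wordProd T (List.ofFn w)).adjoint) x‖
      ≤ ∑ w : Fin k → Fin n, ‖c (List.ofFn w)‖ * ‖(wordProd T (List.ofFn w)).adjoint x‖ := by
        rw [sum_apply]
        refine norm_sum_le_of_le _ fun w _ => ?_
        rw [smul_apply, norm_smul, RCLike.norm_conj]
    _ ≤ coeffNorm c k * √(∑ w : Fin k → Fin n, ‖(wordProd T (List.ofFn w)).adjoint x‖ ^ 2) :=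
        Real.sum_mul_le_sqrt_mul_sqrt _ _ _
    _ ≤ coeffNorm c k * (rowNorm T ^ k * ‖x‖) := by
        have hrow : 0 ≤ rowNorm T ^ k * ‖x‖ :=
          mul_nonneg (pow_nonneg (rowNorm_nonneg T) k) (norm_nonneg x)
        refine mul_le_mul_of_nonneg_left ?_ (coeffNorm_nonneg c k)
        exact Real.sqrt_le_iff.mpr ⟨hrow, sum_norm_adjoint_wordProd_apply_sq_le T k x⟩
    _ = coeffNorm c k * rowNorm T ^ k * ‖x‖ := by ring

lemma norm_homogeneousPart_norm_le {E : Type*} [SeminormedAddCommGroup E] (a : List (Fin n) → E)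
    {T : Fin n → K →L[𝕜] K} {ρ : ℝ} (hT : rowNorm T ≤ ρ) (k : ℕ) :
    ‖homogeneousPart (fun α => (‖a α‖ : 𝕜)) T k‖ ≤ coeffNorm a k * ρ ^ k := by
  refine (norm_homogeneousPart_le _ T k).trans ?_
  rw [coeffNorm_ofReal, coeffNorm_norm]
  exact mul_le_mul_of_nonneg_left (pow_le_pow_left₀ (rowNorm_nonneg T) hT k) (coeffNorm_nonneg a k)

lemma norm_sum_ofReal_smul_adjoint_wordProd (c : List (Fin n) → ℝ) (T : Fin n → K →L[𝕜] K)
    (k : ℕ) :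
    ‖∑ w : Fin k → Fin n, (c (List.ofFn w) : 𝕜) • (wordProd T (List.ofFn w)).adjoint‖ =
      ‖homogeneousPart (fun α => (c α : 𝕜)) T k‖ := by
  rw [← LinearIsometryEquiv.norm_map ContinuousLinearMap.adjoint (homogeneousPart _ _ _),
    adjoint_homogeneousPart]
  simp only [RCLike.conj_ofReal]

theorem bohr_half_rowNorm {E : Type*} [SeminormedAddCommGroup E] {a : List (Fin n) → E}
    (ha : ∀ k, coeffNorm a (k + 1) ≤ 1 - coeffNorm a 0) {T : Fin n → K →L[𝕜] K}
    (hT : rowNorm T ≤ 1 / 2) :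
    Summable (fun k => ‖homogeneousPart (fun α => (‖a α‖ : 𝕜)) T k‖) ∧
      ∑' k, ‖homogeneousPart (fun α => (‖a α‖ : 𝕜)) T k‖ ≤ 1 :=
  bohr_half ha (fun _ => norm_nonneg _) (norm_homogeneousPart_norm_le a hT)

theorem bohr_third_rowNorm {E : Type*} [SeminormedAddCommGroup E] {a : List (Fin n) → E}
    (ha : ∀ k, coeffNorm a (k + 1) ≤ 1 - coeffNorm a 0) {T : Fin n → K →L[𝕜] K}
    (hT : rowNorm T ≤ 1 / 3) :
    Summable (fun k : ℕ => ‖∑ w : Fin (k + 1) → Fin n,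
      (‖a (List.ofFn w)‖ : 𝕜) • (wordProd T (List.ofFn w)).adjoint‖) ∧
    Summable (fun k => ‖homogeneousPart (fun α => (‖a α‖ : 𝕜)) T (k + 1)‖) ∧
    (∑' k : ℕ, ‖∑ w : Fin (k + 1) → Fin n,
        (‖a (List.ofFn w)‖ : 𝕜) • (wordProd T (List.ofFn w)).adjoint‖) + ‖a []‖ +
      ∑' k, ‖homogeneousPart (fun α => (‖a α‖ : 𝕜)) T (k + 1)‖ ≤ 1 := by
  obtain ⟨hsummable, hle⟩ :=
    bohr_third ha (fun _ => norm_nonneg _) (norm_homogeneousPart_norm_le (𝕜 := 𝕜) a hT)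
  simp only [norm_sum_ofReal_smul_adjoint_wordProd (‖a ·‖), ← coeffNorm_zero a]
  exact ⟨hsummable, hsummable, by linarith⟩

end RowOperator

section ScalarTuple

variable {n : ℕ}

lemma homogeneousPart_le_coeffNorm_mul_sqrt_pow (c : List (Fin n) → ℝ) (r : Fin n → ℝ) (k : ℕ) :
    homogeneousPart c r k ≤ coeffNorm c k * √(∑ i, r i ^ 2) ^ k := by
  have hsq : ∑ w : Fin k → Fin n, wordProd r (List.ofFn w) ^ 2 = (∑ i, r i ^ 2) ^ k := by
    simp [Fintype.sum_pow, wordProd, List.prod_ofFn, Finset.prod_pow]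
  have hsqrt : √((∑ i, r i ^ 2) ^ k) = √(∑ i, r i ^ 2) ^ k := by
    rw [Real.sqrt_eq_iff_eq_sq (by positivity) (by positivity), ← pow_mul, mul_comm, pow_mul,
      Real.sq_sqrt (by positivity)]
  have hcs := Real.sum_mul_le_sqrt_mul_sqrt Finset.univ
    (fun w : Fin k → Fin n => c (List.ofFn w)) (fun w => wordProd r (List.ofFn w))
  rw [hsq, hsqrt] at hcs
  simpa [coeffNorm, homogeneousPart] using hcs

lemma wordProd_nonneg {r : Fin n → ℝ} (hr : ∀ i, 0 ≤ r i) (α : List (Fin n)) :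
    0 ≤ wordProd r α :=
  List.prod_nonneg (by simpa [List.forall_mem_map] using fun i _ => hr i)

lemma hasSum_list_of_nonneg {ι : Type*} [Fintype ι] {F : List ι → ℝ} (hF : ∀ l, 0 ≤ F l) {s : ℝ}
    (h : HasSum (fun k : ℕ => ∑ w : Fin k → ι, F (List.ofFn w)) s) : HasSum F s := by
  have hsummable : Summable fun p : Σ k : ℕ, Fin k → ι => F (List.ofFn p.2) := by
    rw [summable_sigma_of_nonneg fun p => hF _]
    exact ⟨fun k => Summable.of_finite, by simpa [tsum_fintype] using h.summable⟩
  rw [← List.equivSigmaTuple.symm.hasSum_iff,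
    h.unique (hsummable.hasSum.sigma fun k => hasSum_fintype _)]
  exact hsummable.hasSum

lemma hasSum_ne_nil_of_nonneg {ι : Type*} [Fintype ι] {F : List ι → ℝ} (hF : ∀ l, 0 ≤ F l)
    {s : ℝ} (h : HasSum (fun k : ℕ => ∑ w : Fin (k + 1) → ι, F (List.ofFn w)) s) :
    HasSum (fun l : {l : List ι // l ≠ []} => F l.1) s := by
  have htotal : HasSum F (F [] + s) := by
    refine hasSum_list_of_nonneg hF ?_
    rw [← hasSum_nat_add_iff' 1]
    simpa using h
  have hnil : HasSum (F ∘ (↑) : ({[]} : Set (List ι)) → ℝ) (F []) := hasSum_unique _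
  exact hnil.hasSum_compl_iff.mpr htotal

variable {E : Type*} [SeminormedAddCommGroup E] {a : List (Fin n) → E} {r : Fin n → ℝ}

lemma homogeneousPart_norm_le (a : List (Fin n) → E) {ρ : ℝ} (h : √(∑ i, r i ^ 2) ≤ ρ) (k : ℕ) :
    homogeneousPart (fun α => ‖a α‖) r k ≤ coeffNorm a k * ρ ^ k := by
  refine (homogeneousPart_le_coeffNorm_mul_sqrt_pow _ r k).trans ?_
  rw [coeffNorm_norm]
  exact mul_le_mul_of_nonneg_left (pow_le_pow_left₀ (Real.sqrt_nonneg _) h k) (coeffNorm_nonneg a k)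

lemma norm_mul_wordProd_nonneg (a : List (Fin n) → E) (hr : ∀ i, 0 ≤ r i) (α : List (Fin n)) :
    0 ≤ ‖a α‖ * wordProd r α :=
  mul_nonneg (norm_nonneg _) (wordProd_nonneg hr α)

theorem bohr_half_scalar (ha : ∀ k, coeffNorm a (k + 1) ≤ 1 - coeffNorm a 0)
    (hr : ∀ i, 0 ≤ r i) (hr_norm : √(∑ i, r i ^ 2) ≤ 1 / 2) :
    Summable (fun α => ‖a α‖ * wordProd r α) ∧ ∑' α, ‖a α‖ * wordProd r α ≤ 1 := by
  have hF := norm_mul_wordProd_nonneg a hr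
  obtain ⟨hsummable, hle⟩ := bohr_half ha (fun _ => Finset.sum_nonneg fun _ _ => hF _)
    (homogeneousPart_norm_le a hr_norm)
  have hsum := hasSum_list_of_nonneg hF hsummable.hasSum
  exact ⟨hsum.summable, hsum.tsum_eq.trans_le hle⟩

theorem bohr_third_scalar (ha : ∀ k, coeffNorm a (k + 1) ≤ 1 - coeffNorm a 0)
    (hr : ∀ i, 0 ≤ r i) (hr_norm : √(∑ i, r i ^ 2) ≤ 1 / 3) :
    Summable (fun α : {l : List (Fin n) // l ≠ []} => ‖a α.1‖ * wordProd r α.1) ∧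
      ‖a []‖ + 2 * ∑' α : {l : List (Fin n) // l ≠ []}, ‖a α.1‖ * wordProd r α.1 ≤ 1 := by
  have hF := norm_mul_wordProd_nonneg a hr
  obtain ⟨hsummable, hle⟩ := bohr_third ha (fun _ => Finset.sum_nonneg fun _ _ => hF _)
    (homogeneousPart_norm_le a hr_norm)
  have hsum := hasSum_ne_nil_of_nonneg hF hsummable.hasSum
  rw [← coeffNorm_zero, hsum.tsum_eq]
  exact ⟨hsum.summable, hle⟩

end ScalarTuple

theorem stmt_17 (n : ℕ) (hn : 1 ≤ n)
    (a : List (Fin n) → ℂ) (ha_im : (a []).im = 0)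
    (hconv : ∀ r : ℝ, 0 ≤ r → r < 1 →
      Summable (fun k : ℕ =>
        r ^ k * Real.sqrt (∑ w : Fin k → Fin n, ‖a (List.ofFn w)‖ ^ 2)))
    (S : Fin n → Fock n →L[ℂ] Fock n)
    (hS : ∀ (i : Fin n) (α : List (Fin n)), S i (fockBasis n α) = fockBasis n (i :: α))
    (hsum1 : ∀ r : ℝ, 0 ≤ r → r < 1 →
      Summable (fun k : ℕ => ∑ w : Fin (k + 1) → Fin n,
        ((r : ℂ) ^ (k + 1) * a (List.ofFn w)) • wordProd S (List.ofFn w)))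
    (hsum2 : ∀ r : ℝ, 0 ≤ r → r < 1 →
      Summable (fun k : ℕ => ∑ w : Fin (k + 1) → Fin n,
        ((r : ℂ) ^ (k + 1) * (starRingEnd ℂ) (a (List.ofFn w))) •
          ContinuousLinearMap.adjoint (wordProd S (List.ofFn w))))
    (hnorm : ∀ r : ℝ, 0 ≤ r → r < 1 →
      ‖(∑' k : ℕ, ∑ w : Fin (k + 1) → Fin n,
          ((r : ℂ) ^ (k + 1) * (starRingEnd ℂ) (a (List.ofFn w))) •
            ContinuousLinearMap.adjoint (wordProd S (List.ofFn w)))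
        + a [] • (1 : Fock n →L[ℂ] Fock n)
        + (∑' k : ℕ, ∑ w : Fin (k + 1) → Fin n,
          ((r : ℂ) ^ (k + 1) * a (List.ofFn w)) • wordProd S (List.ofFn w))‖ ≤ 1) :
    (∀ k : ℕ, 1 ≤ k →
      Real.sqrt (∑ w : Fin k → Fin n, ‖a (List.ofFn w)‖ ^ 2) ≤
        1 - ‖a []‖) ∧
    (∀ (K : Type) [NormedAddCommGroup K] [InnerProductSpace ℂ K] [CompleteSpace K],
      ∀ T : Fin n → K →L[ℂ] K,
        Real.sqrt ‖∑ i, T i * ContinuousLinearMap.adjoint (T i)‖ ≤ 1 / 2 →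
        Summable (fun k : ℕ => ‖∑ w : Fin k → Fin n,
          ((‖a (List.ofFn w)‖ : ℂ)) • wordProd T (List.ofFn w)‖) ∧
        ∑' k : ℕ, ‖∑ w : Fin k → Fin n,
          ((‖a (List.ofFn w)‖ : ℂ)) • wordProd T (List.ofFn w)‖ ≤ 1) ∧
    (∀ (K : Type) [NormedAddCommGroup K] [InnerProductSpace ℂ K] [CompleteSpace K],
      ∀ T : Fin n → K →L[ℂ] K,
        Real.sqrt ‖∑ i, T i * ContinuousLinearMap.adjoint (T i)‖ ≤ 1 / 3 →
        Summable (fun k : ℕ => ‖∑ w : Fin (k + 1) → Fin n,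
          ((‖a (List.ofFn w)‖ : ℂ)) •
            ContinuousLinearMap.adjoint (wordProd T (List.ofFn w))‖) ∧
        Summable (fun k : ℕ => ‖∑ w : Fin (k + 1) → Fin n,
          ((‖a (List.ofFn w)‖ : ℂ)) • wordProd T (List.ofFn w)‖) ∧
        (∑' k : ℕ, ‖∑ w : Fin (k + 1) → Fin n,
          ((‖a (List.ofFn w)‖ : ℂ)) •
            ContinuousLinearMap.adjoint (wordProd T (List.ofFn w))‖)
          + ‖a []‖
          + (∑' k : ℕ, ‖∑ w : Fin (k + 1) → Fin n,
            ((‖a (List.ofFn w)‖ : ℂ)) • wordProd T (List.ofFn w)‖) ≤ 1) ∧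
    (∀ r : Fin n → ℝ, (∀ i, 0 ≤ r i) →
      (Real.sqrt (∑ i, r i ^ 2) ≤ 1 / 2 →
        Summable (fun α : List (Fin n) => ‖a α‖ * wordProd r α) ∧
        ∑' α : List (Fin n), ‖a α‖ * wordProd r α ≤ 1) ∧
      (Real.sqrt (∑ i, r i ^ 2) ≤ 1 / 3 →
        Summable (fun α : {l : List (Fin n) // l ≠ []} =>
          ‖a α.1‖ * wordProd r α.1) ∧
        ‖a []‖ +
          2 * ∑' α : {l : List (Fin n) // l ≠ []},
            ‖a α.1‖ * wordProd r α.1 ≤ 1)) := by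
  have hcoeff (k : ℕ) : coeffNorm a (k + 1) ≤ 1 - coeffNorm a 0 := by
    have ha : ((a []).re : ℂ) = a [] := Complex.ext rfl ha_im.symm
    rw [coeffNorm_zero, ← Complex.abs_re_eq_norm.mpr ha_im]
    simp only [sum_mul_smul_wordProd] at hsum1 hnorm
    refine IsLeftCreation.coeffNorm_succ_le_one_sub_abs hS
      (fun r hr => (hsum1 r hr.1.le hr.2).hasSum) (fun r hr => ?_) k
    rw [adjoint_tsum_pow_smul_homogeneousPart, Complex.conj_ofReal, ha]
    exact hnorm r hr.1.le hr.2
  refine ⟨fun k hk => ?_, fun K _ _ _ T => bohr_half_rowNorm hcoeff,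
    fun K _ _ _ T => bohr_third_rowNorm hcoeff,
    fun r hr => ⟨bohr_half_scalar hcoeff hr, bohr_third_scalar hcoeff hr⟩⟩
  obtain ⟨m, rfl⟩ := Nat.exists_eq_add_of_le' hk
  exact coeffNorm_zero a ▸ hcoeff m
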